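/- Let N be a natural number, let a_1, ..., a_N be distinct positive real numbers, and let A_1, ..., A_N be positive real numbers. Then every eigenvector f of the weighted Cauchy matrix C_{a,A} satisfies ⟨v_A, f⟩ ≠ 0; that is, v_A is not orthogonal to any eigenvector of C_{a,A}. -/

import Mathlib

/-!
Let `D = diag(a)`, `C = C_{a,A}` and `v = v_A`. The entries of `C` are chosen so that the Lyapunov
identity `C D + D C = v vᵀ` holds (`cauchyMatrix_lyapunov`). Suppose `C f = b f` and `⟨v, f⟩ = 0`.
Then `C D f = -b D f`, and pairing with `f` gives `conj b * ⟨f, D f⟩ = -b * ⟨f, D f⟩`. Since `C` is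
Hermitian, `b` is real, and `⟨f, D f⟩ > 0` because `D` is positive definite; hence `b = 0`.

It remains to see that `C` is injective. If `C g = 0`, the Lyapunov identity paired with `g` gives
`|⟨v, g⟩|² = 0`, so `⟨v, g⟩ = 0`, and then the identity itself gives `C D g = 0`. Thus the kernel of
`C` is invariant under `D` and orthogonal to `v`, so `⟨v, Dⁱ f⟩ = 0` for every `i`. As the `a_k` are
distinct, invertibility of the Vandermonde matrix forces every `√A_k f_k` to vanish, so `f = 0`.
-/

open Matrix MeasureTheory
open scoped ComplexOrder

/-- The weighted Cauchy matrix `C_{a,A} = (√(A_j A_k)/(a_j + a_k))_{j,k}`, as a complex matrix. -/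
noncomputable def cauchyMatrix {N : ℕ} (a A : Fin N → ℝ) : Matrix (Fin N) (Fin N) ℂ :=
  Matrix.of fun j k => ((Real.sqrt (A j * A k) / (a j + a k) : ℝ) : ℂ)

/-- The vector `v_A = (√A_1, ..., √A_N)` in `ℂ^N`. -/
noncomputable def vecA {N : ℕ} (A : Fin N → ℝ) : Fin N → ℂ :=
  fun k => ((Real.sqrt (A k) : ℝ) : ℂ)

lemma cauchyMatrix_lyapunov {N : ℕ} {a A : Fin N → ℝ} (ha0 : ∀ k, 0 < a k) (hA : ∀ k, 0 < A k)
    (g : Fin N → ℂ) :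
    cauchyMatrix a A *ᵥ (fun k => (a k : ℂ) * g k)
      + (fun j => (a j : ℂ) * (cauchyMatrix a A *ᵥ g) j) = (vecA A ⬝ᵥ g) • vecA A := by
  ext j
  simp only [Pi.add_apply, Pi.smul_apply, smul_eq_mul, mulVec, dotProduct, Finset.mul_sum,
    Finset.sum_mul, ← Finset.sum_add_distrib]
  refine Finset.sum_congr rfl fun k _ => ?_
  have h : (a j : ℂ) + a k ≠ 0 := by
    exact_mod_cast (add_pos (ha0 j) (ha0 k)).ne'
  simp only [cauchyMatrix, vecA, Matrix.of_apply, Real.sqrt_mul (hA j).le]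
  push_cast
  field_simp
  ring

lemma cauchyMatrix_isHermitian {N : ℕ} (a A : Fin N → ℝ) : (cauchyMatrix a A).IsHermitian := by
  ext j k
  simp [cauchyMatrix, Matrix.conjTranspose_apply, mul_comm (A j), add_comm (a j : ℂ)]

lemma cauchyMatrix_star_dotProduct {N : ℕ} (a A : Fin N → ℝ) (g h : Fin N → ℂ) :
    star g ⬝ᵥ (cauchyMatrix a A *ᵥ h) = star (cauchyMatrix a A *ᵥ g) ⬝ᵥ h := by
  rw [dotProduct_mulVec, star_mulVec, (cauchyMatrix_isHermitian a A).eq]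

lemma star_vecA {N : ℕ} (A : Fin N → ℝ) : star (vecA A) = vecA A := by
  ext k
  simp [vecA]

/-- The kernel of `C_{a,A}` is orthogonal to `v_A`. -/
lemma vecA_dotProduct_eq_zero_of_ker {N : ℕ} {a A : Fin N → ℝ} (ha0 : ∀ k, 0 < a k)
    (hA : ∀ k, 0 < A k) {g : Fin N → ℂ} (hg : cauchyMatrix a A *ᵥ g = 0) :
    vecA A ⬝ᵥ g = 0 := by
  have h := congrArg (star g ⬝ᵥ ·) (cauchyMatrix_lyapunov ha0 hA g)
  have h0 : (fun j => (a j : ℂ) * (0 : Fin N → ℂ) j) = 0 := by ext; simp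
  have hs : star g ⬝ᵥ vecA A = star (vecA A ⬝ᵥ g) := by
    rw [← star_dotProduct_star, star_vecA, dotProduct_comm]
  simp only [hg, h0, add_zero, cauchyMatrix_star_dotProduct, star_zero, zero_dotProduct,
    dotProduct_smul, smul_eq_mul, hs] at h
  simpa using h.symm

/-- The kernel of `C_{a,A}` is invariant under `diag(a)`. -/
lemma cauchyMatrix_ker_invariant {N : ℕ} {a A : Fin N → ℝ} (ha0 : ∀ k, 0 < a k)
    (hA : ∀ k, 0 < A k) {g : Fin N → ℂ} (hg : cauchyMatrix a A *ᵥ g = 0) :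
    cauchyMatrix a A *ᵥ (fun k => (a k : ℂ) * g k) = 0 := by
  have h := cauchyMatrix_lyapunov ha0 hA g
  rw [vecA_dotProduct_eq_zero_of_ker ha0 hA hg, hg, zero_smul] at h
  have h0 : (fun j => (a j : ℂ) * (0 : Fin N → ℂ) j) = 0 := by ext; simp
  rwa [h0, add_zero] at h

lemma cauchyMatrix_ker_eq_zero {N : ℕ} {a A : Fin N → ℝ} (ha : Function.Injective a)
    (ha0 : ∀ k, 0 < a k) (hA : ∀ k, 0 < A k) {f : Fin N → ℂ}
    (hf : cauchyMatrix a A *ᵥ f = 0) : f = 0 := by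
  have hpow : ∀ i : ℕ, cauchyMatrix a A *ᵥ (fun k => (a k : ℂ) ^ i * f k) = 0 := by
    intro i
    induction i with
    | zero => simpa using hf
    | succ i ih =>
      have := cauchyMatrix_ker_invariant ha0 hA ih
      simpa only [pow_succ', mul_assoc] using this
  have hinj : Function.Injective (fun k => (a k : ℂ)) := Complex.ofReal_injective.comp ha
  have hz : (fun k => vecA A k * f k) = 0 := by
    refine eq_zero_of_forall_pow_sum_mul_pow_eq_zero hinj fun i => ?_
    rw [← vecA_dotProduct_eq_zero_of_ker ha0 hA (hpow i)]
    exact Finset.sum_congr rfl fun k _ => by ring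
  ext k
  have hv : vecA A k ≠ 0 := by
    simpa [vecA] using (Real.sqrt_pos.2 (hA k)).ne'
  exact (mul_eq_zero.1 (congrFun hz k)).resolve_left hv

/-- The vector `v_A` is not orthogonal to any eigenvector of `C_{a,A}`. -/
theorem cauchyMatrix_vecA_not_orthogonal (N : ℕ) (a A : Fin N → ℝ)
    (ha : Function.Injective a) (ha0 : ∀ k, 0 < a k) (hA : ∀ k, 0 < A k)
    (f : Fin N → ℂ) (hf0 : f ≠ 0) (b : ℂ)
    (hf : cauchyMatrix a A *ᵥ f = b • f) :
    vecA A ⬝ᵥ star f ≠ 0 := by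
  intro h
  have hv : vecA A ⬝ᵥ f = 0 := by
    have h' := congrArg star h
    rwa [star_zero, ← star_dotProduct_star, star_star, star_vecA, dotProduct_comm] at h'
  have hreal : star b = b := by
    have h1 := cauchyMatrix_star_dotProduct a A f f
    rw [hf, star_smul, dotProduct_smul, smul_dotProduct] at h1
    exact (smul_left_injective ℂ (dotProduct_star_self_pos_iff.2 hf0).ne'
      (by simpa [dotProduct_comm] using h1)).symm
  set g : Fin N → ℂ := fun k => (a k : ℂ) * f k with hg
  have hCg : cauchyMatrix a A *ᵥ g = -(b • g) := by
    have h1 := cauchyMatrix_lyapunov ha0 hA f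
    rw [hv, zero_smul, hf] at h1
    rw [eq_neg_iff_add_eq_zero, ← h1]
    congr 1
    ext k
    simp only [hg, Pi.smul_apply, smul_eq_mul]
    ring
  -- `⟨f, D f⟩ = ∑ a_k |f_k|²` is positive since every `a_k` is and `f ≠ 0`.
  have hpos : star f ⬝ᵥ g ≠ 0 := by
    have hE : star f ⬝ᵥ g = ((∑ k, a k * Complex.normSq (f k) : ℝ) : ℂ) := by
      simp only [dotProduct, hg, Pi.star_apply, Complex.ofReal_sum, Complex.ofReal_mul,
        Complex.normSq_eq_conj_mul_self]
      exact Finset.sum_congr rfl fun k _ => by rw [RCLike.star_def]; ring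
    obtain ⟨k, hk⟩ := Function.ne_iff.1 hf0
    rw [hE, Complex.ofReal_ne_zero]
    exact (Finset.sum_pos' (fun k _ => mul_nonneg (ha0 k).le (Complex.normSq_nonneg _))
      ⟨k, Finset.mem_univ _, mul_pos (ha0 k) (Complex.normSq_pos.2 hk)⟩).ne'
  have hb : b = 0 := by
    have h1 := cauchyMatrix_star_dotProduct a A f g
    rw [hCg, hf, star_smul, hreal, dotProduct_neg, dotProduct_smul, smul_dotProduct,
      smul_eq_mul, neg_eq_iff_add_eq_zero, ← two_mul] at h1
    simpa [hpos] using h1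
  exact hf0 (cauchyMatrix_ker_eq_zero ha ha0 hA (by rw [hf, hb, zero_smul]))
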